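/- arXiv:0710.0429 — 2 statements merged into one kernel-verified Lean document; each statement's English description precedes it below -/
import Mathlib

section
/- The quadruple (S(X,Ω), concatenation, {P_ω : ω ∈ Ω}, j_X) is the free Ω-operated semigroup on X. Precisely: for every semigroup H, every family of maps α_ω : H → H (ω ∈ Ω), and every map f : X → H, there exists a unique semigroup homomorphism (multiplication-preserving map) φ : S(X,Ω) → H such that φ(x) = f(x) for every x ∈ X and φ(P_ω(w)) = α_ω(φ(w)) for every w ∈ S(X,Ω) and every ω ∈ Ω. -/
/-- The left bracket letter `⌊_ω` as a one-letter word. -/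
def lbr {X Ω : Type*} (ω : Ω) : FreeMonoid (X ⊕ (Ω ⊕ Ω)) :=
  FreeMonoid.of (Sum.inr (Sum.inl ω))

/-- The right bracket letter `⌋_ω` as a one-letter word. -/
def rbr {X Ω : Type*} (ω : Ω) : FreeMonoid (X ⊕ (Ω ⊕ Ω)) :=
  FreeMonoid.of (Sum.inr (Sum.inr ω))

/-- The operator `P_ω` on the free monoid: `P_ω w = ⌊_ω w ⌋_ω`. -/
def Pop {X Ω : Type*} (ω : Ω) (w : FreeMonoid (X ⊕ (Ω ⊕ Ω))) : FreeMonoid (X ⊕ (Ω ⊕ Ω)) :=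
  lbr ω * w * rbr ω

/-- `S(X,Ω)`: the smallest subset of the free monoid on `X ⊔ {⌊_ω} ⊔ {⌋_ω}` containing all
one-letter words `x` (`x ∈ X`), closed under concatenation and all operators `P_ω`. -/
inductive IsSW (X Ω : Type*) : FreeMonoid (X ⊕ (Ω ⊕ Ω)) → Prop
  | letter (x : X) : IsSW X Ω (FreeMonoid.of (Sum.inl x))
  | mul {u v : FreeMonoid (X ⊕ (Ω ⊕ Ω))} : IsSW X Ω u → IsSW X Ω v → IsSW X Ω (u * v)
  | op (ω : Ω) {u : FreeMonoid (X ⊕ (Ω ⊕ Ω))} : IsSW X Ω u → IsSW X Ω (Pop ω u)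

/-- `S(X,Ω)` as a subsemigroup of the free monoid. -/
def SWsub (X Ω : Type*) : Subsemigroup (FreeMonoid (X ⊕ (Ω ⊕ Ω))) where
  carrier := {w | IsSW X Ω w}
  mul_mem' := fun h1 h2 => IsSW.mul h1 h2

/-- The operator `P_ω` restricted to `S(X,Ω)`. -/
def PopSub {X Ω : Type*} (ω : Ω) (w : SWsub X Ω) : SWsub X Ω :=
  ⟨Pop ω w.1, IsSW.op ω w.2⟩

/-- The natural map `j_X : X → S(X,Ω)` sending `x` to the one-letter word `x`. -/
def jSW {X Ω : Type*} (x : X) : SWsub X Ω :=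
  ⟨FreeMonoid.of (Sum.inl x), IsSW.letter x⟩

/-!
A word is read from right to left by a stack machine over `H` with a unit adjoined: a letter `x`
multiplies the top of the stack by `f x`, a right bracket pushes `1`, and a left bracket `⌊_ω`
pops the top, applies `α ω` to it and multiplies the new top by the result. A word of `S(X,Ω)`
acts on stacks as multiplication of the top by a single element of `H`. That element is determined
by the word alone, not by the way the word was built, so it serves as the value of the word under
the required homomorphism.
-/

namespace SWsub

variable {X Ω H : Type*}

@[elab_as_elim]
theorem induction {p : SWsub X Ω → Prop} (letter : ∀ x, p (jSW x))
    (mul : ∀ u v, p u → p v → p (u * v)) (op : ∀ ω w, p w → p (PopSub ω w))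
    (w : SWsub X Ω) : p w := by
  obtain ⟨w, hw⟩ := w
  induction hw with
  | letter x => exact letter x
  | mul hu hv ihu ihv => exact mul ⟨_, hu⟩ ⟨_, hv⟩ ihu ihv
  | op ω hu ihu => exact op ω ⟨_, hu⟩ ihu

theorem hom_ext [Mul H] {α : Ω → H → H} {φ ψ : SWsub X Ω →ₙ* H}
    (hφ : ∀ ω w, φ (PopSub ω w) = α ω (φ w)) (hψ : ∀ ω w, ψ (PopSub ω w) = α ω (ψ w))
    (h : ∀ x, φ (jSW x) = ψ (jSW x)) : φ = ψ := by
  ext w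
  induction w using SWsub.induction with
  | letter x => exact h x
  | mul u v hu hv => rw [map_mul, map_mul, hu, hv]
  | op ω w hw => rw [hφ, hψ, hw]

/-- The states of the stack machine: nonempty stacks with entries in `H` with a unit adjoined,
split into the top entry and the rest. -/
abbrev Stack (H : Type*) : Type _ := WithOne H × List (WithOne H)

/-- Left multiplication of the top of the stack, as a representation of `H` on stacks. -/
def topMul [Semigroup H] : H →ₙ* Function.End (Stack H) where
  toFun h := fun σ => (h * σ.1, σ.2)
  map_mul' h k := by
    funext σ
    exact Prod.ext (mul_assoc (h : WithOne H) k σ.1) rfl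

theorem topMul_injective [Semigroup H] :
    Function.Injective (topMul : H → Function.End (Stack H)) := fun h k hhk => by
  have htop : (h : WithOne H) * 1 = k * 1 := congrArg Prod.fst (congrFun hhk (1, []))
  simpa only [mul_one, WithOne.coe_inj] using htop

/-- The effect of a left bracket on a stack: pop the top entry `a`, apply `g` to it, and multiply
the new top by the result. The values at `a = 1` and on a stack of height one are junk, since
neither case arises in reading a word of `S(X,Ω)`. -/
def popApply [Mul H] (g : H → H) : Function.End (Stack H)
  | (a, b :: s) => (WithOne.recOneCoe 1 (fun h => (g h : WithOne H)) a * b, s)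
  | (a, []) => (a, [])

/-- The action of words on stacks, each word being read from right to left (so that
concatenation becomes composition). -/
def stackAction [Semigroup H] (α : Ω → H → H) (f : X → H) :
    FreeMonoid (X ⊕ (Ω ⊕ Ω)) →* Function.End (Stack H) :=
  FreeMonoid.lift fun
    | .inl x => topMul (f x)
    | .inr (.inl ω) => popApply (α ω)
    | .inr (.inr _) => fun σ => (1, σ.1 :: σ.2)

section Evaluation

variable [Semigroup H] (α : Ω → H → H) (f : X → H)

theorem stackAction_jSW (x : X) : stackAction α f (jSW x : SWsub X Ω) = topMul (f x) :=
  FreeMonoid.lift_eval_of _ _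

variable {α f} in
theorem stackAction_Pop {w : FreeMonoid (X ⊕ (Ω ⊕ Ω))} {h : H}
    (hw : stackAction α f w = topMul h) (ω : Ω) :
    stackAction α f (Pop ω w) = topMul (α ω h) := by
  funext σ
  calc stackAction α f (Pop ω w) σ
      = popApply (α ω) (stackAction α f w (1, σ.1 :: σ.2)) := by
        simp only [Pop, lbr, rbr, map_mul, stackAction, FreeMonoid.lift_eval_of]
        rfl
    _ = popApply (α ω) (h * 1, σ.1 :: σ.2) := by rw [hw]; rfl
    _ = topMul (α ω h) σ := by rw [mul_one]; rfl

theorem exists_topMul_eq_stackAction (w : SWsub X Ω) : ∃ h, topMul h = stackAction α f w := by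
  induction w using SWsub.induction with
  | letter x => exact ⟨f x, (stackAction_jSW α f x).symm⟩
  | mul u v hu hv =>
    obtain ⟨h, hu⟩ := hu
    obtain ⟨k, hv⟩ := hv
    exact ⟨h * k, by rw [map_mul, hu, hv, MulMemClass.coe_mul, map_mul]⟩
  | op ω w hw =>
    obtain ⟨h, hw⟩ := hw
    exact ⟨α ω h, (stackAction_Pop hw.symm ω).symm⟩

/-- The value of a word of `S(X,Ω)` in `H`: the element by which it multiplies the top of
every stack. -/
noncomputable def eval (w : SWsub X Ω) : H :=
  (exists_topMul_eq_stackAction α f w).choose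

theorem topMul_eval (w : SWsub X Ω) : topMul (eval α f w) = stackAction α f w :=
  (exists_topMul_eq_stackAction α f w).choose_spec

/-- The homomorphism of operated semigroups extending `f`. -/
noncomputable def lift : SWsub X Ω →ₙ* H where
  toFun := eval α f
  map_mul' u v := topMul_injective <| by
    simp only [map_mul, topMul_eval, MulMemClass.coe_mul]

theorem lift_jSW (x : X) : lift α f (jSW x : SWsub X Ω) = f x :=
  topMul_injective <| (topMul_eval α f _).trans (stackAction_jSW α f x)

theorem lift_PopSub (ω : Ω) (w : SWsub X Ω) : lift α f (PopSub ω w) = α ω (lift α f w) :=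
  topMul_injective <| (topMul_eval α f _).trans (stackAction_Pop (topMul_eval α f w).symm ω)

end Evaluation

end SWsub

/-- `(S(X,Ω), concatenation, {P_ω}, j_X)` is the free `Ω`-operated semigroup on `X`:
for every semigroup `H`, family of maps `α_ω : H → H` and map `f : X → H`, there is a unique
semigroup homomorphism (multiplication-preserving map) `φ : S(X,Ω) → H` with `φ (j_X x) = f x`
for all `x ∈ X` and `φ (P_ω w) = α_ω (φ w)` for all `w ∈ S(X,Ω)`, `ω ∈ Ω`. -/
theorem motzkinWords_free_operated_semigroup
    (X Ω : Type*) [Nonempty X] [Nonempty Ω]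
    (H : Type*) [Semigroup H] (α : Ω → H → H) (f : X → H) :
    ∃! φ : SWsub X Ω →ₙ* H,
      (∀ x : X, φ (jSW x) = f x) ∧
      ∀ (ω : Ω) (w : SWsub X Ω), φ (PopSub ω w) = α ω (φ w) := by
  refine ⟨SWsub.lift α f, ⟨SWsub.lift_jSW α f, SWsub.lift_PopSub α f⟩, ?_⟩
  rintro ψ ⟨hψ_letter, hψ_op⟩
  exact SWsub.hom_ext hψ_op (SWsub.lift_PopSub α f) fun x =>
    (hψ_letter x).trans (SWsub.lift_jSW α f x).symm
end

section
/- A word w over the alphabet X ⊔ {⌊, ⌋} belongs to W(X) if and only if (i) the number of occurrences of ⌊ in w equals the number of occurrences of ⌋ in w, and (ii) for every prefix of w, the number of occurrences of ⌊ in the prefix is greater than or equal to the number of occurrences of ⌋ in the prefix. That is, the operated submonoid of the free monoid generated by X coincides with the set of X-decorated Motzkin words. -/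
/-- The left bracket letter `⌊` (alphabet `X ⊕ Bool`, with `Sum.inr true = ⌊`,
`Sum.inr false = ⌋`). -/
def lb {X : Type*} : FreeMonoid (X ⊕ Bool) := FreeMonoid.of (Sum.inr true)

/-- The right bracket letter `⌋`. -/
def rb {X : Type*} : FreeMonoid (X ⊕ Bool) := FreeMonoid.of (Sum.inr false)

/-- `W(X)`: the smallest subset of the free monoid on `X ⊔ {⌊, ⌋}` containing the empty
word `1` and all one-letter words `x` (`x ∈ X`), closed under concatenation and under
`P(w) = ⌊ w ⌋`. -/
inductive IsMW (X : Type*) : FreeMonoid (X ⊕ Bool) → Prop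
  | one : IsMW X 1
  | letter (x : X) : IsMW X (FreeMonoid.of (Sum.inl x))
  | mul {u v : FreeMonoid (X ⊕ Bool)} : IsMW X u → IsMW X v → IsMW X (u * v)
  | op {u : FreeMonoid (X ⊕ Bool)} : IsMW X u → IsMW X (lb * u * rb)

/-! Read a word as a lattice path: `⌊` is a step up, `⌋` a step down, a letter of `X` a level step.
Balanced words are the paths from height `0` to height `0` that never go below `0`. Such paths can
be concatenated and lifted by one step, so every word of `W(X)` is balanced. Conversely, cutting a
path from height `n` to height `0` at its first passages through the heights `n - 1, …, 0` writes it
as `u₀ ⌋ u₁ ⌋ ⋯ ⌋ uₙ` with all `uᵢ` in `W(X)`. This is proved for all `n` at once by adding letters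
on the left: a letter of `X` is absorbed by `u₀`, a new `⌋` is preceded by an empty block, and a new
`⌊` fuses the first two blocks into `⌊u₀⌋u₁`. -/

/-- The Boolean test for the letter `⌊`, used to count the steps up. -/
def isLb {X : Type*} : X ⊕ Bool → Bool := Sum.elim (fun _ => false) id

/-- The Boolean test for the letter `⌋`, used to count the steps down. -/
def isRb {X : Type*} : X ⊕ Bool → Bool := Sum.elim (fun _ => false) not

/-- `IsMotzkinPath m n w` says that `w`, read as a lattice path with a step up for each `⌊`, a step
down for each `⌋` and a level step for each letter of `X`, leads from height `m` to height `n`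
without going below `0`. Both conditions are written without subtraction. -/
def IsMotzkinPath {X : Type*} (m n : ℕ) (w : FreeMonoid (X ⊕ Bool)) : Prop :=
  m + w.toList.countP isLb = n + w.toList.countP isRb ∧
    ∀ p : List (X ⊕ Bool), p <+: w.toList → p.countP isRb ≤ m + p.countP isLb

/-- `IsMWDescent X n w` says that `w = u₀ ⌋ u₁ ⌋ ⋯ ⌋ uₙ` with all `uᵢ` in `W(X)`. This is
the form taken by the paths from height `n` to height `0`. -/
inductive IsMWDescent (X : Type*) : ℕ → FreeMonoid (X ⊕ Bool) → Prop
  | base {u : FreeMonoid (X ⊕ Bool)} : IsMW X u → IsMWDescent X 0 u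
  | step {n : ℕ} {u v : FreeMonoid (X ⊕ Bool)} :
      IsMW X u → IsMWDescent X n v → IsMWDescent X (n + 1) (u * rb * v)

theorem forall_prefix_cons_iff {α : Type*} {a : α} {l : List α} {P : List α → Prop} :
    (∀ p, p <+: a :: l → P p) ↔ P [] ∧ ∀ p, p <+: l → P (a :: p) := by
  simp [← List.mem_inits]

section

variable {X : Type*} {m n k : ℕ} {u v w : FreeMonoid (X ⊕ Bool)}

@[elab_as_elim]
theorem bracketWord_induction {motive : FreeMonoid (X ⊕ Bool) → Prop} (w : FreeMonoid (X ⊕ Bool))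
    (one : motive 1)
    (letter_mul : ∀ x w, motive w → motive (FreeMonoid.of (Sum.inl x) * w))
    (lb_mul : ∀ w, motive w → motive (lb * w))
    (rb_mul : ∀ w, motive w → motive (rb * w)) : motive w := by
  induction w using FreeMonoid.inductionOn' with
  | one => exact one
  | of_mul a w ih =>
    rcases a with x | _ | _
    exacts [letter_mul x w ih, rb_mul w ih, lb_mul w ih]

theorem isMotzkinPath_one : IsMotzkinPath m n (1 : FreeMonoid (X ⊕ Bool)) ↔ m = n := by
  simp [IsMotzkinPath]

theorem isMotzkinPath_letter_mul {x : X} :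
    IsMotzkinPath m n (FreeMonoid.of (Sum.inl x) * w) ↔ IsMotzkinPath m n w := by
  simp [IsMotzkinPath, forall_prefix_cons_iff, isLb, isRb]

theorem isMotzkinPath_lb_mul : IsMotzkinPath m n (lb * w) ↔ IsMotzkinPath (m + 1) n w := by
  simp [IsMotzkinPath, lb, forall_prefix_cons_iff, List.countP_cons, isLb, isRb, add_assoc,
    add_comm]

theorem isMotzkinPath_succ_rb_mul :
    IsMotzkinPath (m + 1) n (rb * w) ↔ IsMotzkinPath m n w := by
  simp [IsMotzkinPath, rb, forall_prefix_cons_iff, isLb, isRb, ← add_assoc, add_right_comm _ 1]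

theorem not_isMotzkinPath_zero_rb_mul : ¬IsMotzkinPath 0 n (rb * w) := fun h => by
  simpa [isLb, isRb] using h.2 [Sum.inr false] (by simp [rb])

theorem IsMotzkinPath.mul (hu : IsMotzkinPath m n u) (hv : IsMotzkinPath n k v) :
    IsMotzkinPath m k (u * v) := by
  induction u using bracketWord_induction generalizing m with
  | one => rwa [isMotzkinPath_one.1 hu, one_mul]
  | letter_mul x u ih =>
    rw [mul_assoc, isMotzkinPath_letter_mul]
    exact ih (isMotzkinPath_letter_mul.1 hu)
  | lb_mul u ih =>
    rw [mul_assoc, isMotzkinPath_lb_mul]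
    exact ih (isMotzkinPath_lb_mul.1 hu)
  | rb_mul u ih =>
    cases m with
    | zero => exact absurd hu not_isMotzkinPath_zero_rb_mul
    | succ m =>
      rw [mul_assoc, isMotzkinPath_succ_rb_mul]
      exact ih (isMotzkinPath_succ_rb_mul.1 hu)

theorem IsMotzkinPath.add_right (hw : IsMotzkinPath m n w) (k : ℕ) :
    IsMotzkinPath (m + k) (n + k) w :=
  ⟨by linarith [hw.1], fun p hp => by linarith [hw.2 p hp]⟩

theorem IsMW.isMotzkinPath (hw : IsMW X w) : IsMotzkinPath 0 0 w := by
  induction hw with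
  | one => exact isMotzkinPath_one.2 rfl
  | letter x => simpa using isMotzkinPath_letter_mul.2 (isMotzkinPath_one.2 rfl)
  | mul _ _ hu hv => exact hu.mul hv
  | op _ hu =>
    have rb_path : IsMotzkinPath 1 0 (rb : FreeMonoid (X ⊕ Bool)) := by
      simpa using isMotzkinPath_succ_rb_mul.2 (isMotzkinPath_one.2 rfl)
    rw [mul_assoc, isMotzkinPath_lb_mul]
    exact (hu.add_right 1).mul rb_path

theorem IsMWDescent.mul_left (hu : IsMW X u) (hw : IsMWDescent X n w) :
    IsMWDescent X n (u * w) := by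
  cases hw with
  | base hw => exact .base (hu.mul hw)
  | step hv hw => simpa only [mul_assoc] using step (hu.mul hv) hw

theorem IsMWDescent.lb_mul (hw : IsMWDescent X (n + 1) w) : IsMWDescent X n (lb * w) := by
  cases hw with
  | step hu hv => simpa only [mul_assoc] using hv.mul_left hu.op

theorem IsMWDescent.rb_mul (hw : IsMWDescent X n w) : IsMWDescent X (n + 1) (rb * w) := by
  simpa only [one_mul] using step .one hw

theorem IsMotzkinPath.isMWDescent (hw : IsMotzkinPath n 0 w) : IsMWDescent X n w := by
  induction w using bracketWord_induction generalizing n with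
  | one =>
    obtain rfl := isMotzkinPath_one.1 hw
    exact .base .one
  | letter_mul x w ih => exact (ih (isMotzkinPath_letter_mul.1 hw)).mul_left (.letter x)
  | lb_mul w ih => exact (ih (isMotzkinPath_lb_mul.1 hw)).lb_mul
  | rb_mul w ih =>
    cases n with
    | zero => exact absurd hw not_isMotzkinPath_zero_rb_mul
    | succ n => exact (ih (isMotzkinPath_succ_rb_mul.1 hw)).rb_mul

theorem isMWDescent_zero : IsMWDescent X 0 w ↔ IsMW X w :=
  ⟨fun | .base hw => hw, .base⟩

theorem isMW_iff_isMotzkinPath : IsMW X w ↔ IsMotzkinPath 0 0 w :=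
  ⟨IsMW.isMotzkinPath, fun hw => isMWDescent_zero.1 hw.isMWDescent⟩

end

/-- A word `w` over `X ⊔ {⌊, ⌋}` lies in `W(X)` if and only if (i) the number of `⌊`'s in
`w` equals the number of `⌋`'s in `w`, and (ii) in every prefix of `w`, the number of `⌊`'s
is at least the number of `⌋`'s. -/
theorem isMW_iff_balanced (X : Type*) [Nonempty X] (w : FreeMonoid (X ⊕ Bool)) :
    IsMW X w ↔
      ((FreeMonoid.toList w).countP (fun a => a matches Sum.inr true) =
        (FreeMonoid.toList w).countP (fun a => a matches Sum.inr false)) ∧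
      ∀ p : List (X ⊕ Bool), p <+: FreeMonoid.toList w →
        p.countP (fun a => a matches Sum.inr false) ≤
          p.countP (fun a => a matches Sum.inr true) := by
  have matches_lb : (fun a : X ⊕ Bool => a matches Sum.inr true) = isLb := by
    funext a
    rcases a with _ | _ | _ <;> rfl
  have matches_rb : (fun a : X ⊕ Bool => a matches Sum.inr false) = isRb := by
    funext a
    rcases a with _ | _ | _ <;> rfl
  rw [matches_lb, matches_rb, isMW_iff_isMotzkinPath]
  simp only [IsMotzkinPath, zero_add]
end
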